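/- arXiv:1804.05682 — 2 statements merged into one kernel-verified Lean document; each statement's English description precedes it below -/
import Mathlib

section
/- For every L > 0 and every λ > 0 there exists a C^∞ function k : ℝ² → ℝ solving the kernel model (kEq) with parameter λ, i.e. k_{xxx}(x,y) + k_{yyy}(x,y) + k_y(x,y) + k_x(x,y) = -λ k(x,y) for all (x,y) with 0 ≤ y ≤ x ≤ L, k(x,x) = 0 and k(x,0) = 0 for all x ∈ [0,L], and (∂_x k)(x,x) = λx/3 for all x ∈ [0,L]. -/
open MeasureTheory Real

/-- Partial derivative in the first variable. -/
noncomputable def pd1 (f : ℝ × ℝ → ℝ) : ℝ × ℝ → ℝ := fun q => deriv (fun s => f (s, q.2)) q.1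

/-- Partial derivative in the second variable. -/
noncomputable def pd2 (f : ℝ × ℝ → ℝ) : ℝ × ℝ → ℝ := fun q => deriv (fun s => f (q.1, s)) q.2

/-- `k` solves the kernel model (kEq) with parameter `lam` on the triangle `Δ_L`. -/
def SolvesKEq (L lam : ℝ) (k : ℝ × ℝ → ℝ) : Prop :=
  (∀ x y : ℝ, 0 ≤ y → y ≤ x → x ≤ L →
      pd1 (pd1 (pd1 k)) (x, y) + pd2 (pd2 (pd2 k)) (x, y) + pd2 k (x, y) + pd1 k (x, y)
        = -lam * k (x, y)) ∧
  (∀ x : ℝ, 0 ≤ x → x ≤ L → k (x, x) = 0) ∧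
  (∀ x : ℝ, 0 ≤ x → x ≤ L → k (x, 0) = 0) ∧
  (∀ x : ℝ, 0 ≤ x → x ≤ L → pd1 k (x, x) = lam * x / 3)

namespace KEq

/-- Normalized monomial. -/
noncomputable def e (n : ℕ) (x : ℝ) : ℝ := x ^ n / (n.factorial : ℝ)

/-- Its derivative. -/
noncomputable def e' (n : ℕ) (x : ℝ) : ℝ := (n * x ^ (n - 1)) / (n.factorial : ℝ)

lemma e'_zero (x : ℝ) : e' 0 x = 0 := by simp [e']

lemma e'_succ (n : ℕ) (x : ℝ) : e' (n + 1) x = e n x := by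
  unfold e' e
  rw [Nat.factorial_succ]
  push_cast
  have h1 : ((n : ℝ) + 1) ≠ 0 := by positivity
  have h2 : (n.factorial : ℝ) ≠ 0 := by positivity
  field_simp
  try simp

lemma hasDerivAt_e (n : ℕ) (x : ℝ) : HasDerivAt (e n) (e' n x) x := by
  unfold e' e
  exact (hasDerivAt_pow n x).div_const _

lemma abs_e_le (n : ℕ) {x r : ℝ} (hx : |x| ≤ r) :
    |e n x| ≤ (2 * (1 + r)) ^ n / (n.factorial : ℝ) := by
  have hr : 0 ≤ r := (abs_nonneg x).trans hx
  unfold e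
  rw [abs_div, abs_pow, Nat.abs_cast]
  gcongr
  linarith

lemma abs_e'_le (n : ℕ) {x r : ℝ} (hx : |x| ≤ r) :
    |e' n x| ≤ (2 * (1 + r)) ^ n / (n.factorial : ℝ) := by
  have hr : 0 ≤ r := (abs_nonneg x).trans hx
  unfold e'
  rw [abs_div, abs_mul, abs_pow, Nat.abs_cast, Nat.abs_cast, mul_pow]
  have h1 : (n : ℝ) ≤ 2 ^ n := by exact_mod_cast (Nat.lt_two_pow_self (n := n)).le
  have h2 : |x| ^ (n - 1) ≤ (1 + r) ^ n := by
    calc |x| ^ (n - 1) ≤ (1 + r) ^ (n - 1) := by gcongr; linarith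
      _ ≤ (1 + r) ^ n := pow_le_pow_right₀ (by linarith) (by omega)
  gcongr

/-- Geometric bounds on coefficient arrays. -/
def Bd (a : ℕ → ℕ → ℝ) : Prop :=
  ∃ M R : ℝ, 0 ≤ M ∧ 1 ≤ R ∧ ∀ i j, |a i j| ≤ M * (R ^ i * R ^ j)

/-- Shift in the first index. -/
def S1 (a : ℕ → ℕ → ℝ) : ℕ → ℕ → ℝ := fun i j => a (i + 1) j

/-- Shift in the second index. -/
def S2 (a : ℕ → ℕ → ℝ) : ℕ → ℕ → ℝ := fun i j => a i (j + 1)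

lemma Bd.s1 {a} (h : Bd a) : Bd (S1 a) := by
  obtain ⟨M, R, hM, hR, h⟩ := h
  refine ⟨M * R, R, by positivity, hR, fun i j => (h (i + 1) j).trans (le_of_eq ?_)⟩
  ring

lemma Bd.s2 {a} (h : Bd a) : Bd (S2 a) := by
  obtain ⟨M, R, hM, hR, h⟩ := h
  refine ⟨M * R, R, by positivity, hR, fun i j => (h i (j + 1)).trans (le_of_eq ?_)⟩
  ring

lemma Bd.sub {a b} (ha : Bd a) (hb : Bd b) : Bd (a - b) := by
  obtain ⟨M, R, hM, hR, ha⟩ := ha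
  obtain ⟨M', R', hM', hR', hb⟩ := hb
  refine ⟨M + M', max R R', by positivity, le_max_of_le_left hR, fun i j => ?_⟩
  have h1 : M * (R ^ i * R ^ j) ≤ M * (max R R' ^ i * max R R' ^ j) := by
    gcongr <;> exact le_max_left _ _
  have h2 : M' * (R' ^ i * R' ^ j) ≤ M' * (max R R' ^ i * max R R' ^ j) := by
    gcongr <;> exact le_max_right _ _
  calc |a i j - b i j| ≤ |a i j| + |b i j| := abs_sub _ _
    _ ≤ _ := by linarith [ha i j, hb i j]

/-- Terms of the double series. -/
noncomputable def tm (a : ℕ → ℕ → ℝ) (p : ℕ × ℕ) (q : ℝ × ℝ) : ℝ :=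
  a p.1 p.2 * (e p.1 q.1 * e p.2 q.2)

/-- The double series. -/
noncomputable def F (a : ℕ → ℕ → ℝ) (q : ℝ × ℝ) : ℝ := ∑' p : ℕ × ℕ, tm a p q

/-- Derivative of a term. -/
noncomputable def tm' (a : ℕ → ℕ → ℝ) (p : ℕ × ℕ) (q : ℝ × ℝ) : ℝ × ℝ →L[ℝ] ℝ :=
  (a p.1 p.2 * (e' p.1 q.1 * e p.2 q.2)) • ContinuousLinearMap.fst ℝ ℝ ℝ +
  (a p.1 p.2 * (e p.1 q.1 * e' p.2 q.2)) • ContinuousLinearMap.snd ℝ ℝ ℝ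

lemma hasFDerivAt_tm (a p q) : HasFDerivAt (tm a p) (tm' a p q) q := by
  have h1 : HasFDerivAt (fun q : ℝ × ℝ => e p.1 q.1)
      (e' p.1 q.1 • ContinuousLinearMap.fst ℝ ℝ ℝ) q :=
    (hasDerivAt_e p.1 q.1).comp_hasFDerivAt q hasFDerivAt_fst
  have h2 : HasFDerivAt (fun q : ℝ × ℝ => e p.2 q.2)
      (e' p.2 q.2 • ContinuousLinearMap.snd ℝ ℝ ℝ) q :=
    (hasDerivAt_e p.2 q.2).comp_hasFDerivAt q hasFDerivAt_snd
  have h := (h1.mul h2).const_mul (a p.1 p.2)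
  refine h.congr_fderiv ?_
  ext <;> simp only [tm', ContinuousLinearMap.comp_apply, ContinuousLinearMap.inl_apply, ContinuousLinearMap.inr_apply, _root_.add_apply, _root_.smul_apply, ContinuousLinearMap.coe_fst', ContinuousLinearMap.coe_snd', smul_eq_mul] <;> ring

/-- Uniform summable majorant. -/
lemma exists_bound {a} (h : Bd a) (r : ℝ) : ∃ u : ℕ × ℕ → ℝ, Summable u ∧
    ∀ p, ∀ s t : ℝ, |s| ≤ r → |t| ≤ r →
      |a p.1 p.2 * (e p.1 s * e p.2 t)| ≤ u p ∧
      |a p.1 p.2 * (e' p.1 s * e p.2 t)| ≤ u p ∧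
      |a p.1 p.2 * (e p.1 s * e' p.2 t)| ≤ u p := by
  obtain ⟨M, R, hM, hR, h⟩ := h
  by_cases hr : 0 ≤ r
  swap
  · exact ⟨0, summable_zero, fun p s t hs => absurd ((abs_nonneg s).trans hs) hr⟩
  set T := 2 * (1 + r) with hT
  have hT0 : 0 ≤ T := by positivity
  refine ⟨fun p => M * (((R * T) ^ p.1 / (p.1.factorial : ℝ)) *
    ((R * T) ^ p.2 / (p.2.factorial : ℝ))), ?_, ?_⟩
  · apply Summable.mul_left
    exact (Real.summable_pow_div_factorial (R * T)).mul_of_nonneg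
      (Real.summable_pow_div_factorial (R * T))
      (fun n => by positivity) (fun n => by positivity)
  · intro p s t hs ht
    have key : ∀ x y : ℝ, |x| ≤ T ^ p.1 / (p.1.factorial : ℝ) →
        |y| ≤ T ^ p.2 / (p.2.factorial : ℝ) →
        |a p.1 p.2 * (x * y)| ≤ M * (((R * T) ^ p.1 / (p.1.factorial : ℝ)) *
          ((R * T) ^ p.2 / (p.2.factorial : ℝ))) := by
      intro x y hx hy
      rw [abs_mul, abs_mul]
      calc |a p.1 p.2| * (|x| * |y|) ≤ (M * (R ^ p.1 * R ^ p.2)) *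
            ((T ^ p.1 / (p.1.factorial : ℝ)) * (T ^ p.2 / (p.2.factorial : ℝ))) := by
            gcongr
            exact h _ _
        _ = _ := by rw [mul_pow R T, mul_pow R T]; ring
    exact ⟨key _ _ (abs_e_le _ hs) (abs_e_le _ ht), key _ _ (abs_e'_le _ hs) (abs_e_le _ ht),
      key _ _ (abs_e_le _ hs) (abs_e'_le _ ht)⟩

lemma abs_fst_le (q : ℝ × ℝ) : |q.1| ≤ ‖q‖ := norm_fst_le q

lemma abs_snd_le (q : ℝ × ℝ) : |q.2| ≤ ‖q‖ := norm_snd_le q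

lemma summable_tm {a} (h : Bd a) (q : ℝ × ℝ) : Summable (fun p => tm a p q) := by
  obtain ⟨u, hu, hb⟩ := exists_bound h ‖q‖
  exact Summable.of_norm_bounded hu fun p => (hb p q.1 q.2 (abs_fst_le q) (abs_snd_le q)).1

lemma tsum_s1 (a) (q : ℝ × ℝ) :
    ∑' p : ℕ × ℕ, a p.1 p.2 * (e' p.1 q.1 * e p.2 q.2) = F (S1 a) q := by
  have hi : Function.Injective (fun p : ℕ × ℕ => (p.1 + 1, p.2)) := by
    rintro ⟨i, j⟩ ⟨k, l⟩ h
    simpa using h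
  unfold F
  rw [← hi.tsum_eq]
  · simp [tm, S1, e'_succ]
  · rintro ⟨i, j⟩ hp
    cases i with
    | zero => simp [e'_zero] at hp
    | succ i => exact ⟨(i, j), rfl⟩

lemma tsum_s2 (a) (q : ℝ × ℝ) :
    ∑' p : ℕ × ℕ, a p.1 p.2 * (e p.1 q.1 * e' p.2 q.2) = F (S2 a) q := by
  have hi : Function.Injective (fun p : ℕ × ℕ => (p.1, p.2 + 1)) := by
    rintro ⟨i, j⟩ ⟨k, l⟩ h
    simpa using h
  unfold F
  rw [← hi.tsum_eq]
  · simp [tm, S2, e'_succ]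
  · rintro ⟨i, j⟩ hp
    cases j with
    | zero => simp [e'_zero] at hp
    | succ j => exact ⟨(i, j), rfl⟩

lemma hasFDerivAt_F {a} (h : Bd a) (q : ℝ × ℝ) : HasFDerivAt (F a)
    (F (S1 a) q • ContinuousLinearMap.fst ℝ ℝ ℝ + F (S2 a) q • ContinuousLinearMap.snd ℝ ℝ ℝ) q := by
  obtain ⟨u, hu, hb⟩ := exists_bound h (‖q‖ + 1)
  have hq : q ∈ Metric.ball (0 : ℝ × ℝ) (‖q‖ + 1) := by simp
  have main := hasFDerivAt_tsum_of_isPreconnected (𝕜 := ℝ) (u := fun p => u p + u p)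
    (f := tm a) (f' := tm' a) (hu.add hu)
    (Metric.isOpen_ball (x := (0 : ℝ × ℝ)) (ε := ‖q‖ + 1))
    (convex_ball (0 : ℝ × ℝ) (‖q‖ + 1)).isPreconnected
    (fun p x _ => hasFDerivAt_tm a p x) ?_ hq (summable_tm h q) hq
  · refine main.congr_fderiv ?_
    obtain ⟨u, hu, hb⟩ := exists_bound h ‖q‖
    have s1 : Summable fun p : ℕ × ℕ => a p.1 p.2 * (e' p.1 q.1 * e p.2 q.2) :=
      Summable.of_norm_bounded hu fun p => (hb p q.1 q.2 (abs_fst_le q) (abs_snd_le q)).2.1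
    have s2 : Summable fun p : ℕ × ℕ => a p.1 p.2 * (e p.1 q.1 * e' p.2 q.2) :=
      Summable.of_norm_bounded hu fun p => (hb p q.1 q.2 (abs_fst_le q) (abs_snd_le q)).2.2
    rw [← tsum_s1, ← tsum_s2]
    exact ((s1.hasSum.smul_const _).add (s2.hasSum.smul_const _)).tsum_eq
  · intro p x hx
    have hx' : ‖x‖ ≤ ‖q‖ + 1 := by simpa using (mem_ball_zero_iff.1 hx).le
    obtain ⟨-, b1, b2⟩ := hb p x.1 x.2 ((abs_fst_le x).trans hx') ((abs_snd_le x).trans hx')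
    unfold tm'
    refine (norm_add_le _ _).trans (add_le_add ?_ ?_)
    · rw [norm_smul]
      refine (mul_le_of_le_one_right (norm_nonneg _) ?_).trans b1
      exact ContinuousLinearMap.norm_fst_le ℝ ℝ ℝ
    · rw [norm_smul]
      refine (mul_le_of_le_one_right (norm_nonneg _) ?_).trans b2
      exact ContinuousLinearMap.norm_snd_le ℝ ℝ ℝ

lemma contDiff_F_nat (n : ℕ) : ∀ {a}, Bd a → ContDiff ℝ n (F a) := by
  induction n with
  | zero =>
    intro a h
    exact contDiff_zero.2 (continuous_iff_continuousAt.2 fun q => (hasFDerivAt_F h q).continuousAt)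
  | succ n ih =>
    intro a h
    have := (contDiff_succ_iff_hasFDerivAt (𝕜 := ℝ) (n := n) (f := F a)).2
      ⟨_, ?_, hasFDerivAt_F h⟩
    · exact_mod_cast this
    · exact ((ih h.s1).smul contDiff_const).add ((ih h.s2).smul contDiff_const)

lemma contDiff_F {a} (h : Bd a) : ContDiff ℝ (⊤ : ℕ∞) (F a) :=
  contDiff_infty.2 fun n => contDiff_F_nat n h

lemma F_sub {a b} (ha : Bd a) (hb : Bd b) (q) : F (a - b) q = F a q - F b q := by
  unfold F
  rw [← (summable_tm ha q).tsum_sub (summable_tm hb q)]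
  simp [tm, sub_mul]

/-- The series in the original variables. -/
noncomputable def K (a : ℕ → ℕ → ℝ) (q : ℝ × ℝ) : ℝ := F a (q.1 - q.2, q.2)

lemma pd1_K {a} (h : Bd a) : pd1 (K a) = K (S1 a) := by
  funext q
  have h1 : HasDerivAt (fun s : ℝ => (s - q.2, q.2)) ((1 : ℝ), (0 : ℝ)) q.1 :=
    ((hasDerivAt_id q.1).sub_const _).prodMk (hasDerivAt_const _ _)
  have := HasFDerivAt.comp_hasDerivAt (f := fun s : ℝ => (s - q.2, q.2)) q.1
    (hasFDerivAt_F h (q.1 - q.2, q.2)) h1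
  refine this.deriv.trans ?_
  simp [K]

lemma pd2_K {a} (h : Bd a) : pd2 (K a) = K (S2 a - S1 a) := by
  funext q
  have h1 : HasDerivAt (fun s : ℝ => (q.1 - s, s)) ((-1 : ℝ), (1 : ℝ)) q.2 :=
    ((hasDerivAt_id q.2).const_sub _).prodMk (hasDerivAt_id _)
  have := HasFDerivAt.comp_hasDerivAt (f := fun s : ℝ => (q.1 - s, s)) q.2
    (hasFDerivAt_F h (q.1 - q.2, q.2)) h1
  refine this.deriv.trans ?_
  simp [K, F_sub h.s2 h.s1]
  ring

/-- Coefficients of the solution. -/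
noncomputable def co (lam : ℝ) : ℕ → ℕ → ℝ
  | 0, _ => 0
  | 1, j => if j = 1 then lam / 3 else 0
  | _ + 2, 0 => 0
  | n + 2, j + 1 => co lam (n + 1) (j + 2) -
      (co lam n (j + 3) + co lam n (j + 1) + lam * co lam n j) / 3

lemma co_zero_right (lam : ℝ) : ∀ i, co lam i 0 = 0
  | 0 => by simp [co]
  | 1 => by simp [co]
  | _ + 2 => by simp [co]

lemma co_bound (lam : ℝ) (hl : 0 < lam) :
    ∀ i, (∀ j, |co lam i j| ≤ lam * (2 + lam) ^ i) ∧
      (∀ j, |co lam (i + 1) j| ≤ lam * (2 + lam) ^ (i + 1)) := by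
  intro i
  induction i with
  | zero =>
    refine ⟨fun j => by simp [co]; exact hl.le, fun j => ?_⟩
    simp only [co]
    split_ifs
    · rw [abs_of_pos (by positivity)]; nlinarith
    · simp; positivity
  | succ n ih =>
    refine ⟨ih.2, fun j => ?_⟩
    cases j with
    | zero => rw [co_zero_right]; simp; positivity
    | succ j =>
      rw [show n + 1 + 1 = n + 2 from rfl, co]
      have h1 := abs_le.1 (ih.2 (j + 2))
      have h2 := abs_le.1 (ih.1 (j + 3))
      have h3 := abs_le.1 (ih.1 (j + 1))
      have h4' : |lam * co lam n j| ≤ lam * (lam * (2 + lam) ^ n) := by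
        rw [abs_mul, abs_of_pos hl]; gcongr; exact ih.1 j
      have h4 := abs_le.1 h4'
      have hP : 0 < lam * (2 + lam) ^ n := by positivity
      rw [pow_succ, ← mul_assoc] at h1
      rw [pow_add, ← mul_assoc]
      set P := lam * (2 + lam) ^ n
      have : 0 < P * lam := by positivity
      have : 0 < P * lam ^ 2 := by positivity
      rw [abs_le]
      constructor <;> nlinarith

lemma bd_co (lam : ℝ) (hl : 0 < lam) : Bd (co lam) := by
  refine ⟨lam, 2 + lam, hl.le, by linarith, fun i j => ((co_bound lam hl i).1 j).trans ?_⟩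
  gcongr
  exact le_mul_of_one_le_right (by positivity) (one_le_pow₀ (by linarith))

end KEq

open KEq

/-- for every `L > 0` and `λ > 0` there is a `C^∞` solution of (kEq). -/
theorem stmt_0 (L lam : ℝ) (hL : 0 < L) (hlam : 0 < lam) :
    ∃ k : ℝ × ℝ → ℝ, ContDiff ℝ (⊤ : ℕ∞) k ∧ SolvesKEq L lam k := by
  have h := bd_co lam hlam
  refine ⟨K (co lam), ?_, ?_, ?_, ?_, ?_⟩
  · exact (contDiff_F h).comp ((contDiff_fst.sub contDiff_snd).prodMk contDiff_snd)
  · intro x y _ _ _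
    have d1 := h.s2.sub h.s1
    have d2 := d1.s2.sub d1.s1
    have d3 := d2.s2.sub d2.s1
    rw [pd1_K h, pd1_K h.s1, pd1_K h.s1.s1, pd2_K h, pd2_K d1, pd2_K d2]
    have e1 := (summable_tm h.s1.s1.s1 (x - y, y)).hasSum
    have e2 := (summable_tm d3 (x - y, y)).hasSum
    have e3 := (summable_tm d1 (x - y, y)).hasSum
    have e4 := (summable_tm h.s1 (x - y, y)).hasSum
    have e5 := (summable_tm h (x - y, y)).hasSum.mul_left lam
    have e6 := (((e1.add e2).add e3).add e4).add e5
    have z : ∀ p : ℕ × ℕ, co lam (p.1 + 2) (p.2 + 1) = co lam (p.1 + 1) (p.2 + 2) -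
      (co lam p.1 (p.2 + 3) + co lam p.1 (p.2 + 1) + lam * co lam p.1 p.2) / 3 := by
      intro p; rw [co]
    have e7 := e6.tsum_eq
    rw [tsum_congr (g := fun _ => (0 : ℝ)), tsum_zero] at e7
    · simp only [K, F]
      linarith
    · intro p
      have zp := z p
      simp only [tm, S1, S2, Pi.sub_apply, add_assoc, Nat.reduceAdd]
      rw [zp]
      ring
  · intro x _ _
    have : ∀ p, tm (co lam) p (x - x, x) = 0 := by
      rintro ⟨i, j⟩
      cases i <;> simp [tm, co, e]
    simp only [K, F, this, tsum_zero]
  · intro x _ _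
    have : ∀ p, tm (co lam) p (x - 0, 0) = 0 := by
      rintro ⟨i, j⟩
      cases j <;> simp [tm, co_zero_right, e]
    simp only [K, F, this, tsum_zero]
  · intro x _ _
    rw [pd1_K h]
    simp only [K, F]
    rw [tsum_eq_single (0, 1)]
    · simp [tm, S1, co, e]; ring
    · rintro ⟨i, j⟩ hp
      cases i with
      | zero =>
        have : j ≠ 1 := by rintro rfl; exact hp rfl
        simp [tm, S1, co, this]
      | succ i => simp [tm, e]
end

section
/- For every L > 0 and every λ̃ > 0 there exists a C^∞ function p : ℝ² → ℝ solving the observer kernel model (p-model) with parameter λ̃, i.e. p_{xxx}(x,y) + p_{yyy}(x,y) + p_x(x,y) + p_y(x,y) = λ̃ p(x,y) for all (x,y) with 0 ≤ y ≤ x ≤ L, p(L,y) = 0 for all y ∈ [0,L], p(x,x) = 0 for all x ∈ [0,L], and (∂_x p)(x,x) = -λ̃(x-L)/3 for all x ∈ [0,L]. -/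
open MeasureTheory Real

/-- `p` solves the observer kernel model (p-model) with parameter `lt` on the triangle `Δ_L`. -/
def SolvesPEq (L lt : ℝ) (p : ℝ × ℝ → ℝ) : Prop :=
  (∀ x y : ℝ, 0 ≤ y → y ≤ x → x ≤ L →
      pd1 (pd1 (pd1 p)) (x, y) + pd2 (pd2 (pd2 p)) (x, y) + pd1 p (x, y) + pd2 p (x, y)
        = lt * p (x, y)) ∧
  (∀ y : ℝ, 0 ≤ y → y ≤ L → p (L, y) = 0) ∧
  (∀ x : ℝ, 0 ≤ x → x ≤ L → p (x, x) = 0) ∧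
  (∀ x : ℝ, 0 ≤ x → x ≤ L → pd1 p (x, x) = -(lt * (x - L)) / 3)

namespace PModel

open BoundedContinuousFunction

abbrev E := BoundedContinuousFunction ℕ ℝ

/-- left shift -/
noncomputable def S : E →L[ℝ] E :=
  LinearMap.mkContinuous
    { toFun := fun a => BoundedContinuousFunction.ofNormedAddCommGroupDiscrete
        (fun i => a (i + 1)) ‖a‖ (fun i => a.norm_coe_le_norm _)
      map_add' := by intro a b; ext i; rfl
      map_smul' := by intro a b; ext i; rfl } 1
    (by
      intro a
      rw [one_mul]
      exact (BoundedContinuousFunction.norm_le (norm_nonneg a)).2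
        (fun i => a.norm_coe_le_norm (i + 1)))

/-- right shift -/
noncomputable def U : E →L[ℝ] E :=
  LinearMap.mkContinuous
    { toFun := fun a => BoundedContinuousFunction.ofNormedAddCommGroupDiscrete
        (fun i => if i = 0 then 0 else a (i - 1)) ‖a‖ (fun i => by
          by_cases h : i = 0
          · simp [h]
          · simpa only [h, if_false] using a.norm_coe_le_norm (i - 1))
      map_add' := by
        intro a b; ext i
        by_cases h : i = 0 <;> simp [h]
      map_smul' := by
        intro a b; ext i
        by_cases h : i = 0 <;> simp [h] } 1
    (by
      intro a
      rw [one_mul]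
      refine (BoundedContinuousFunction.norm_le (norm_nonneg a)).2 (fun i => ?_)
      by_cases h : i = 0
      · simp [h]
      · simpa [h] using a.norm_coe_le_norm (i - 1))

noncomputable def ev : E →L[ℝ] ℝ := BoundedContinuousFunction.evalCLM ℝ 0

theorem S_U (a : E) : S (U a) = a := by
  ext i; simp [S, U]

theorem ev_U (a : E) : ev (U a) = 0 := by
  simp [ev, U]

noncomputable def w (lt : ℝ) : E :=
  BoundedContinuousFunction.ofNormedAddCommGroupDiscrete
    (fun i => if i = 0 then lt / 3 else 0) |lt / 3| (fun i => by
      by_cases h : i = 0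
      · simp only [h, if_true]; exact le_rfl
      · simp only [h, if_false, norm_zero]; exact abs_nonneg _)

theorem S_w (lt : ℝ) : S (w lt) = 0 := by
  ext i; simp [S, w]

theorem ev_w (lt : ℝ) : ev (w lt) = lt / 3 := by
  simp [ev, w]

noncomputable def A (lt : ℝ) : E →L[ℝ] E :=
  (-(1/3 : ℝ)) • (S ∘L S ∘L S) + (-(1/3 : ℝ)) • S + (-(lt/3)) • ContinuousLinearMap.id ℝ E

noncomputable def T (lt : ℝ) : (E × E) →L[ℝ] (E × E) :=
  (ContinuousLinearMap.snd ℝ E E).prod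
    (U ∘L (A lt ∘L ContinuousLinearMap.fst ℝ E E + S ∘L S ∘L ContinuousLinearMap.snd ℝ E E))

noncomputable def v (lt : ℝ) : E × E := (0, U (w lt))

section General

variable {X : Type*} [NormedAddCommGroup X] [NormedSpace ℝ X] [CompleteSpace X]

/-- `exp (s B)` -/
noncomputable def eX (B : X →L[ℝ] X) (s : ℝ) : X →L[ℝ] X := NormedSpace.exp (s • B)

theorem eX_zero (B : X →L[ℝ] X) : eX B 0 = 1 := by simp [eX]

theorem eX_deriv (B : X →L[ℝ] X) (s : ℝ) : HasDerivAt (eX B) (eX B s ∘L B) s :=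
  hasDerivAt_exp_smul_const B s

theorem eX_deriv' (B : X →L[ℝ] X) (s : ℝ) : HasDerivAt (eX B) (B ∘L eX B s) s :=
  hasDerivAt_exp_smul_const' B s

theorem eX_deriv_sub (B : X →L[ℝ] X) (c s : ℝ) :
    HasDerivAt (fun u => eX B (c - u)) (-(eX B (c - s) ∘L B)) s :=
  HasDerivAt.comp_const_sub c s (eX_deriv B (c - s))

theorem eX_deriv_sub' (B : X →L[ℝ] X) (c s : ℝ) :
    HasDerivAt (fun u => eX B (c - u)) (-(B ∘L eX B (c - s))) s :=
  HasDerivAt.comp_const_sub c s (eX_deriv' B (c - s))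

theorem eX_deriv_sub_const (B : X →L[ℝ] X) (c s : ℝ) :
    HasDerivAt (fun u => eX B (u - c)) (B ∘L eX B (s - c)) s :=
  HasDerivAt.comp_sub_const s c (eX_deriv' B (s - c))

theorem eX_contDiff (B : X →L[ℝ] X) : ContDiff ℝ (⊤ : ℕ∞) (eX B) := by
  have h : ContDiff ℝ (⊤ : ℕ∞) (NormedSpace.exp : (X →L[ℝ] X) → (X →L[ℝ] X)) :=
    contDiff_iff_contDiffAt.2 fun x => (NormedSpace.exp_analytic (𝕂 := ℝ) x).contDiffAt
  exact h.comp (contDiff_id.smul contDiff_const)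

end General

noncomputable def eS (s : ℝ) : E →L[ℝ] E := eX S s

noncomputable def eT (lt t : ℝ) : (E × E) →L[ℝ] (E × E) := eX (T lt) t

theorem eS_zero : eS 0 = 1 := eX_zero S

theorem eT_zero (lt : ℝ) : eT lt 0 = 1 := eX_zero (T lt)

theorem eS_deriv (s : ℝ) : HasDerivAt eS (eS s ∘L S) s := eX_deriv S s

theorem eT_deriv (lt t : ℝ) : HasDerivAt (eT lt) (T lt ∘L eT lt t) t := eX_deriv' (T lt) t

theorem eS_contDiff : ContDiff ℝ (⊤ : ℕ∞) eS := eX_contDiff S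

theorem eT_contDiff (lt : ℝ) : ContDiff ℝ (⊤ : ℕ∞) (eT lt) := eX_contDiff (T lt)

noncomputable def H (L lt : ℝ) (φ : (E × E) →L[ℝ] E) : ℝ × ℝ → ℝ := fun q =>
  ev (eS (L - q.1) (φ (eT lt (q.1 - q.2) (v lt))))

theorem H_contDiff (L lt : ℝ) (φ : (E × E) →L[ℝ] E) : ContDiff ℝ (⊤ : ℕ∞) (H L lt φ) := by
  unfold H
  refine ev.contDiff.comp (ContDiff.clm_apply ?_ (φ.contDiff.comp (ContDiff.clm_apply ?_ contDiff_const)))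
  · exact eS_contDiff.comp (contDiff_const.sub contDiff_fst)
  · exact (eT_contDiff lt).comp (contDiff_fst.sub contDiff_snd)

set_option maxHeartbeats 2000000 in
theorem H_pd1 (L lt : ℝ) (φ : (E × E) →L[ℝ] E) :
    pd1 (H L lt φ) = H L lt (φ ∘L T lt - S ∘L φ) := by
  funext q
  obtain ⟨x, y⟩ := q
  have h1 : HasDerivAt (fun s : ℝ => eS (L - s)) (-(eS (L - x) ∘L S)) x := 
    eX_deriv_sub S L x
  have h2 : HasDerivAt (fun s : ℝ => eT lt (s - y)) (T lt ∘L eT lt (x - y)) x := 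
    eX_deriv_sub_const (T lt) y x
  have h3 : HasDerivAt (fun s : ℝ => φ (eT lt (s - y) (v lt)))
      (φ ((T lt ∘L eT lt (x - y)) (v lt))) x := by
    refine φ.hasFDerivAt.comp_hasDerivAt x ?_
    simpa using h2.clm_apply (hasDerivAt_const x (v lt))
  have h4 := ev.hasFDerivAt.comp_hasDerivAt x (h1.clm_apply h3)
  refine h4.deriv.trans ?_
  simp [H]
  ring

theorem H_pd2 (L lt : ℝ) (φ : (E × E) →L[ℝ] E) :
    pd2 (H L lt φ) = H L lt (-(φ ∘L T lt)) := by
  funext q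
  obtain ⟨x, y⟩ := q
  have h2 : HasDerivAt (fun s : ℝ => eT lt (x - s)) (-(T lt ∘L eT lt (x - y))) y := 
    eX_deriv_sub' (T lt) x y
  have h3 : HasDerivAt (fun s : ℝ => φ (eT lt (x - s) (v lt)))
      (φ ((-(T lt ∘L eT lt (x - y))) (v lt))) y := by
    refine φ.hasFDerivAt.comp_hasDerivAt y ?_
    simpa using h2.clm_apply (hasDerivAt_const y (v lt))
  have h4 := ev.hasFDerivAt.comp_hasDerivAt y ((hasDerivAt_const y (eS (L - x))).clm_apply h3)
  refine h4.deriv.trans ?_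
  simp [H]

theorem eS_w (lt s : ℝ) : eS s (w lt) = w lt := by
  have hd : ∀ s, HasDerivAt (fun s => eS s (w lt)) 0 s := fun s => by
    simpa [S_w] using (eS_deriv s).clm_apply (hasDerivAt_const s (w lt))
  have := is_const_of_deriv_eq_zero (fun s => (hd s).differentiableAt) (fun s => (hd s).deriv) s 0
  simpa [eS_zero] using this

theorem eS_Uw (lt s : ℝ) : ev (eS s (U (w lt))) = lt * s / 3 := by
  have hd : ∀ s, HasDerivAt (fun s => ev (eS s (U (w lt))) - lt * s / 3) 0 s := fun s => by
    have h1 := (eS_deriv s).clm_apply (hasDerivAt_const s (U (w lt)))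
    have h2 := ev.hasFDerivAt.comp_hasDerivAt s h1
    have h3 := h2.sub (((hasDerivAt_id s).const_mul lt).div_const 3)
    refine h3.congr_deriv ?_
    simp [S_U, eS_w, ev_w]
  have := is_const_of_deriv_eq_zero (fun s => (hd s).differentiableAt) (fun s => (hd s).deriv) s 0
  simp [eS_zero, ev_U] at this
  linarith

theorem ev_snd (lt t : ℝ) : ev (eT lt t (v lt)).2 = 0 := by
  have hd : ∀ t, HasDerivAt (fun t => ev (eT lt t (v lt)).2) 0 t := fun t => by
    have h1 := (eT_deriv lt t).clm_apply (hasDerivAt_const t (v lt))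
    have h2 := (ev ∘L ContinuousLinearMap.snd ℝ E E).hasFDerivAt.comp_hasDerivAt t h1
    refine h2.congr_deriv ?_
    rw [map_zero, add_zero]
    exact ev_U (A lt (eT lt t (v lt)).1 + S (S (eT lt t (v lt)).2))
  have := is_const_of_deriv_eq_zero (fun s => (hd s).differentiableAt) (fun s => (hd s).deriv) t 0
  simpa [eT_zero, v, ev_U] using this

theorem ev_fst (lt t : ℝ) : ev (eT lt t (v lt)).1 = 0 := by
  have hd : ∀ t, HasDerivAt (fun t => ev (eT lt t (v lt)).1) 0 t := fun t => by
    have h1 := (eT_deriv lt t).clm_apply (hasDerivAt_const t (v lt))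
    have h2 := (ev ∘L ContinuousLinearMap.fst ℝ E E).hasFDerivAt.comp_hasDerivAt t h1
    refine h2.congr_deriv ?_
    simp [T, ev_snd]
  have := is_const_of_deriv_eq_zero (fun s => (hd s).differentiableAt) (fun s => (hd s).deriv) t 0
  simpa [eT_zero, v] using this

theorem T_apply (lt : ℝ) (a b : E) : T lt (a, b) = (b, U (A lt a + S (S b))) := rfl

theorem A_apply (lt : ℝ) (a : E) :
    A lt a = (-(1/3 : ℝ)) • S (S (S a)) + (-(1/3 : ℝ)) • S a + (-(lt/3)) • a := rfl

theorem key (lt : ℝ) (z : E × E) :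
    S (T lt (T lt z)).1 = A lt z.1 + S (S z.2) := by
  obtain ⟨a, b⟩ := z
  rw [T_apply, T_apply, S_U]

end PModel

open PModel in
/-- for every `L > 0` and `λ̃ > 0` there is a `C^∞` solution of the p-model. -/
theorem stmt_1 (L lt : ℝ) (hL : 0 < L) (hlt : 0 < lt) :
    ∃ p : ℝ × ℝ → ℝ, ContDiff ℝ (⊤ : ℕ∞) p ∧ SolvesPEq L lt p := by
  refine ⟨H L lt (ContinuousLinearMap.fst ℝ E E), H_contDiff _ _ _, ?_, ?_, ?_, ?_⟩
  · intro x y _ _ _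
    simp only [H_pd1, H_pd2, H]
    rw [← map_add, ← map_add, ← map_add, ← map_add, ← map_add, ← map_add,
      ← smul_eq_mul, ← map_smul, ← map_smul]
    congr 2
    generalize eT lt (x - y) (v lt) = z
    have hk := key lt z
    rw [A_apply] at hk
    have h1 : (T lt z).1 = z.2 := rfl
    simp only [ContinuousLinearMap.comp_apply, sub_apply,
      neg_apply, ContinuousLinearMap.coe_fst', map_sub, map_neg, hk, h1]
    module
  · intro y _ _
    simp [H, eS_zero, ev_fst]
  · intro x _ _
    simp [H, eT_zero, v]
  · intro x _ _
    rw [H_pd1]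
    simp [H, eT_zero, v, T_apply, eS_Uw]
    ring
end
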